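/- arXiv:1408.2572 — 6 statements merged into one kernel-verified Lean document; each statement's English description precedes it below -/
import Mathlib

section
/- Fix a natural number n ≥ 2, reals P > 0 and W > 0, a strictly increasing function r : ℝ → ℝ with r(P) > 0 satisfying n · r(P/((n−1)·P + 1)) < r(P), a function π : ℝ → ℝ → ℝ strictly increasing in its first argument, a probability space (Ω, μ), and a random traffic intensity Λ : Ω → ℝ. If both ω ↦ π(W/n, Λ(ω)) and ω ↦ π((W/r(P)) · r(P/((n−1)·P + 1)), Λ(ω)) are integrable with respect to μ, then the expected utility under equal orthogonal sharing strictly exceeds that under full-spectrum sharing: ∫ π(W/n, Λ(ω)) dμ(ω) > ∫ π((W/r(P)) · r(P/((n−1)·P + 1)), Λ(ω)) dμ(ω). -/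
open MeasureTheory

/-- Lemma 1: the expected utility under equal orthogonal sharing strictly exceeds
that under full-spectrum sharing. -/
theorem orthogonal_beats_full_expected
    {Ω : Type*} [MeasurableSpace Ω] (μ : Measure Ω) [IsProbabilityMeasure μ]
    (n : ℕ) (hn : 2 ≤ n) (P W : ℝ) (hP : 0 < P) (hW : 0 < W)
    (r : ℝ → ℝ) (hr : StrictMono r) (hrP : 0 < r P)
    (hcond : (n : ℝ) * r (P / (((n : ℝ) - 1) * P + 1)) < r P)
    (π : ℝ → ℝ → ℝ) (hπ : ∀ lam : ℝ, StrictMono (fun x => π x lam))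
    (Λ : Ω → ℝ)
    (hint_o : Integrable (fun ω => π (W / n) (Λ ω)) μ)
    (hint_f : Integrable
      (fun ω => π ((W / r P) * r (P / (((n : ℝ) - 1) * P + 1))) (Λ ω)) μ) :
    ∫ ω, π ((W / r P) * r (P / (((n : ℝ) - 1) * P + 1))) (Λ ω) ∂μ
      < ∫ ω, π (W / n) (Λ ω) ∂μ := by
  have hn0 : (0 : ℝ) < n := by
    have : 0 < n := by omega
    exact_mod_cast this
  have hx : (W / r P) * r (P / (((n : ℝ) - 1) * P + 1)) < W / n := by
    rw [div_mul_eq_mul_div, div_lt_div_iff₀ hrP hn0]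
    have := mul_lt_mul_of_pos_left hcond hW
    linarith
  have hlt : ∀ ω, π ((W / r P) * r (P / (((n : ℝ) - 1) * P + 1))) (Λ ω) < π (W / n) (Λ ω) :=
    fun ω => hπ (Λ ω) hx
  rw [← sub_pos, ← integral_sub hint_o hint_f,
    integral_pos_iff_support_of_nonneg (fun ω => (sub_pos.2 (hlt ω)).le) (hint_o.sub hint_f)]
  have hs : Function.support (fun ω => π (W / n) (Λ ω)
      - π ((W / r P) * r (P / (((n : ℝ) - 1) * P + 1))) (Λ ω)) = Set.univ := by
    ext ω
    simpa using (sub_pos.2 (hlt ω)).ne'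
  rw [hs, measure_univ]
  exact one_pos
end

section
/- For every real number P with P ≥ 1.62, one has log(1 + P) > 2 · log(1 + P/(P + 1)), i.e., the two-operator instance of the interference-limited condition holds for the Shannon rate function r(γ) = log(1 + γ). -/
/-- The two-operator interference-limited condition holds for the Shannon rate
whenever `P ≥ 1.62`. -/
theorem shannon_interference_limited_two_ops (P : ℝ) (hP : (1.62 : ℝ) ≤ P) :
    Real.log (1 + P) > 2 * Real.log (1 + P / (P + 1)) := by
  norm_num at hP
  have h0 : 0 < P := by linarith
  have h1 : 0 < P + 1 := by linarith
  have hq : 0 < P ^ 2 - P - 1 := by nlinarith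
  have hc : 0 < P * (P ^ 2 - P - 1) := mul_pos h0 hq
  have h2 : 2 * Real.log (1 + P / (P + 1)) = Real.log ((1 + P / (P + 1)) ^ 2) := by
    rw [Real.log_pow]; norm_num
  rw [h2]
  apply Real.log_lt_log (by positivity)
  have h3 : 1 + P / (P + 1) = (2 * P + 1) / (P + 1) := by field_simp; ring
  rw [h3, div_pow, div_lt_iff₀ (by positivity)]
  nlinarith
end

section
/- For every real number P > 0, the inequality log(1 + P) > 2 · log(1 + P/(P + 1)) holds if and only if P > (1 + √5)/2, the golden ratio. -/
/-- For `P > 0`, the two-operator Shannon interference-limited condition holds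
iff `P` exceeds the golden ratio. -/
theorem shannon_two_ops_iff_golden_ratio (P : ℝ) (hP : 0 < P) :
    Real.log (1 + P) > 2 * Real.log (1 + P / (P + 1)) ↔
      P > (1 + Real.sqrt 5) / 2 := by
  have h5 : Real.sqrt 5 ^ 2 = 5 := Real.sq_sqrt (by norm_num)
  have h0 : 0 ≤ Real.sqrt 5 := Real.sqrt_nonneg 5
  have hlog : 2 * Real.log (1 + P / (P + 1)) = Real.log ((1 + P / (P + 1)) ^ 2) := by
    rw [Real.log_pow]; norm_num
  have hpos : 0 < (1 + P / (P + 1)) ^ 2 := by positivity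
  have hfrac : (1 + P / (P + 1)) ^ 2 = (2 * P + 1) ^ 2 / (P + 1) ^ 2 := by
    field_simp
    ring
  have hfactor : (1 + P) * (P + 1) ^ 2 - (2 * P + 1) ^ 2 = P * (P ^ 2 - P - 1) := by ring
  have hquad : P ^ 2 - P - 1 =
      (P - (1 + Real.sqrt 5) / 2) * (P - (1 - Real.sqrt 5) / 2) := by
    linear_combination (1 / 4 : ℝ) * h5
  have h1 : 1 < Real.sqrt 5 := by nlinarith
  have hc : 0 < P - (1 - Real.sqrt 5) / 2 := by linarith
  rw [gt_iff_lt, hlog, Real.log_lt_log_iff hpos (by linarith), hfrac,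
    div_lt_iff₀ (by positivity), ← sub_pos, hfactor, mul_pos_iff_of_pos_left hP, hquad,
    mul_pos_iff_of_pos_right hc, sub_pos]
end

section
/- Let P > 0 be a real number with log(1 + P) > 2. Then for every integer n ≥ 2, log(1 + P) > n · log(1 + P/((n−1)·P + 1)); i.e., the interference-limited condition holds for the Shannon rate function r(γ) = log(1 + γ) at every number of operators n ≥ 2 whenever P > e² − 1. -/
/-- If `log (1 + P) > 2`, the Shannon interference-limited condition holds for
every number of operators `n ≥ 2`. -/
theorem shannon_interference_limited_all_n (P : ℝ) (hP : 0 < P)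
    (hlog : 2 < Real.log (1 + P)) :
    ∀ n : ℕ, 2 ≤ n →
      (n : ℝ) * Real.log (1 + P / (((n : ℝ) - 1) * P + 1)) < Real.log (1 + P) := by
  intro n hn
  have hn' : (2 : ℝ) ≤ n := by exact_mod_cast hn
  have hd : 0 < ((n : ℝ) - 1) * P + 1 := by nlinarith
  have hq : 0 < P / (((n : ℝ) - 1) * P + 1) := div_pos hP hd
  have h1 := Real.log_le_sub_one_of_pos (show 0 < 1 + P / (((n : ℝ) - 1) * P + 1) by linarith)
  have h2 : (n : ℝ) * (P / (((n : ℝ) - 1) * P + 1)) ≤ 2 := by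
    rw [← mul_div_assoc, div_le_iff₀ hd]
    nlinarith
  have h3 : (n : ℝ) * Real.log (1 + P / (((n : ℝ) - 1) * P + 1))
      ≤ (n : ℝ) * (P / (((n : ℝ) - 1) * P + 1)) :=
    mul_le_mul_of_nonneg_left (by linarith) (by linarith)
  linarith
end

section
/- Let S ⊆ ℝ be a measurable set with Lebesgue measure W > 0, n ≥ 2 a natural number, P > 0 a real, r : ℝ → ℝ continuous and strictly increasing with r(P) > 0, and π : ℝ → ℝ → ℝ strictly increasing in its first argument. Then for every measurable interference profile I : ℝ → ℝ with 0 ≤ I(f) ≤ (n−1)·P for all f ∈ S and every traffic intensity λ: π((1/r(P)) · ∫_S r(P/(1 + I(f))) df, λ) ≥ π((W/r(P)) · r(P/((n−1)·P + 1)), λ), with equality if and only if I(f) = (n−1)·P for almost every f ∈ S. In other words, when an operator best-responds with full power over S, the other n−1 operators minimize its utility exactly by all transmitting at full power, so π_f(λ) = π((W/r(P)) · r(P/((n−1)·P + 1)), λ) is the operator's minimax utility. -/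
open MeasureTheory

/-- Lemma 2 (minimax): against a full-power best responder, the other `n − 1`
operators minimize its utility exactly by all transmitting at full power, so
`π_f(λ)` is the minimax utility. -/
theorem full_power_minimax
    (S : Set ℝ) (hS : MeasurableSet S) (W : ℝ) (hW : 0 < W)
    (hSW : volume S = ENNReal.ofReal W)
    (n : ℕ) (hn : 2 ≤ n) (P : ℝ) (hP : 0 < P)
    (r : ℝ → ℝ) (hrc : Continuous r) (hrm : StrictMono r) (hrP : 0 < r P)
    (π : ℝ → ℝ → ℝ) (hπ : ∀ lam : ℝ, StrictMono (fun x => π x lam))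
    (I : ℝ → ℝ) (hImeas : Measurable I)
    (hIbd : ∀ f ∈ S, 0 ≤ I f ∧ I f ≤ ((n : ℝ) - 1) * P) (lam : ℝ) :
    π ((W / r P) * r (P / (((n : ℝ) - 1) * P + 1))) lam
        ≤ π ((1 / r P) * ∫ f in S, r (P / (1 + I f))) lam ∧
      (π ((W / r P) * r (P / (((n : ℝ) - 1) * P + 1))) lam
          = π ((1 / r P) * ∫ f in S, r (P / (1 + I f))) lam ↔
        ∀ᵐ f ∂(volume.restrict S), I f = ((n : ℝ) - 1) * P) := by
  set M : ℝ := ((n : ℝ) - 1) * P with hM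
  set c : ℝ := r (P / (M + 1)) with hc
  have hSfin : volume S < ⊤ := by rw [hSW]; exact ENNReal.ofReal_lt_top
  have hreal : volume.real S = W := by
    rw [Measure.real, hSW, ENNReal.toReal_ofReal hW.le]
  haveI : IsFiniteMeasure (volume.restrict S) :=
    ⟨by rw [Measure.restrict_apply_univ]; exact hSfin⟩
  have hmem : ∀ᵐ f ∂(volume.restrict S), f ∈ S := ae_restrict_mem hS
  have hlow : ∀ f ∈ S, c ≤ r (P / (1 + I f)) := by
    intro f hf
    obtain ⟨h0, h1⟩ := hIbd f hf
    apply hrm.monotone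
    apply div_le_div_of_nonneg_left hP.le <;> linarith
  have hup : ∀ f ∈ S, r (P / (1 + I f)) ≤ r P := by
    intro f hf
    obtain ⟨h0, h1⟩ := hIbd f hf
    apply hrm.monotone
    apply div_le_self hP.le
    linarith
  have hgm : Measurable (fun f => r (P / (1 + I f))) :=
    hrc.measurable.comp (measurable_const.div (measurable_const.add hImeas))
  have hint : Integrable (fun f => r (P / (1 + I f))) (volume.restrict S) := by
    refine Integrable.of_mem_Icc c (r P) hgm.aemeasurable ?_
    filter_upwards [hmem] with f hf
    exact ⟨hlow f hf, hup f hf⟩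
  have hdint : Integrable (fun f => r (P / (1 + I f)) - c) (volume.restrict S) :=
    hint.sub (integrable_const c)
  have hnn : 0 ≤ᵐ[volume.restrict S] (fun f => r (P / (1 + I f)) - c) := by
    filter_upwards [hmem] with f hf
    exact sub_nonneg.2 (hlow f hf)
  have hdiff : ∫ f in S, (r (P / (1 + I f)) - c) = (∫ f in S, r (P / (1 + I f))) - W * c := by
    rw [integral_sub hint (integrable_const c), setIntegral_const, hreal, smul_eq_mul]
  have hkey : W / r P * c = 1 / r P * (W * c) := by ring
  have hinv : 0 < 1 / r P := by positivity
  have hge := integral_nonneg_of_ae hnn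
  refine ⟨(hπ lam).monotone ?_, ?_⟩
  · rw [hkey]
    apply mul_le_mul_of_nonneg_left _ hinv.le
    linarith
  · have h1 := (hπ lam).injective.eq_iff (a := W / r P * c)
      (b := 1 / r P * ∫ f in S, r (P / (1 + I f)))
    refine h1.trans ?_
    rw [hkey, mul_right_inj' hinv.ne']
    have h2 := integral_eq_zero_iff_of_nonneg_ae hnn hdint
    rw [hdiff, sub_eq_zero, eq_comm] at h2
    rw [h2]
    constructor
    · intro h
      filter_upwards [h, hmem] with f hf hfS
      obtain ⟨h0, h1⟩ := hIbd f hfS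
      have h3 : r (P / (1 + I f)) = r (P / (M + 1)) := sub_eq_zero.1 hf
      have h4 := hrm.injective h3
      have h5 : (1 + I f) ≠ 0 := by linarith
      have h6 : (M + 1) ≠ 0 := by linarith
      rw [div_eq_div_iff h5 h6] at h4
      have := mul_left_cancel₀ hP.ne' h4
      linarith
    · intro h
      filter_upwards [h] with f hf
      simp only [Pi.zero_apply]
      rw [hf, hc, add_comm, sub_self]
end

section
/- Let p, q : ℕ → ℝ be nonnegative summable sequences with Σ_{τ=0}^∞ (p(τ) + q(τ)) = 1 and Σ_{τ=0}^∞ p(τ) > 0, and let A > B ≥ 0 be reals. Define m(τ) = p(τ)·A + q(τ)·B. Then there exists δ₀ ∈ (0, 1) such that for every discount factor δ with δ₀ < δ < 1, the discounted total loss satisfies Σ_{τ=0}^∞ δ^{τ+1} · m(τ) > B. -/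
/-- For `δ` sufficiently close to `1`, the expected discounted loss of an
undetectable deviation exceeds the one-slot gain `B`. -/
theorem discounted_loss_exceeds_gain
    (p q : ℕ → ℝ) (hp0 : ∀ τ, 0 ≤ p τ) (hq0 : ∀ τ, 0 ≤ q τ)
    (hps : Summable p) (hqs : Summable q)
    (hsum : ∑' τ : ℕ, (p τ + q τ) = 1) (hppos : 0 < ∑' τ : ℕ, p τ)
    (A B : ℝ) (hAB : B < A) (hB : 0 ≤ B) :
    ∃ δ₀ ∈ Set.Ioo (0 : ℝ) 1, ∀ δ : ℝ, δ₀ < δ → δ < 1 →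
      B < ∑' τ : ℕ, δ ^ (τ + 1) * (p τ * A + q τ * B) := by
  have hA : 0 ≤ A := hB.trans hAB.le
  have hm0 : ∀ τ, 0 ≤ p τ * A + q τ * B := fun τ =>
    add_nonneg (mul_nonneg (hp0 τ) hA) (mul_nonneg (hq0 τ) hB)
  have hms : Summable (fun τ => p τ * A + q τ * B) :=
    (hps.mul_right A).add (hqs.mul_right B)
  have htot : B < ∑' τ, (p τ * A + q τ * B) := by
    rw [(hps.mul_right A).tsum_add (hqs.mul_right B), tsum_mul_right, tsum_mul_right]
    rw [hps.tsum_add hqs] at hsum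
    have hq : ∑' τ, q τ = 1 - ∑' τ, p τ := by linarith
    rw [hq]
    nlinarith [mul_pos hppos (sub_pos.mpr hAB)]
  obtain ⟨s, hs⟩ := (hms.hasSum.eventually (lt_mem_nhds htot)).exists
  have hc : Continuous (fun δ : ℝ => ∑ τ ∈ s, δ ^ (τ + 1) * (p τ * A + q τ * B)) := by
    fun_prop
  have hev := (hc.continuousAt (x := (1 : ℝ))).eventually
    (lt_mem_nhds (a := B) (by simpa using hs))
  obtain ⟨ε, hε, hball⟩ := Metric.eventually_nhds_iff.mp hev
  refine ⟨max (1 / 2) (1 - ε), ⟨by positivity, max_lt (by norm_num) (by linarith)⟩, ?_⟩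
  intro δ h1 h2
  obtain ⟨h3, h4⟩ := max_lt_iff.mp h1
  have hδ : 0 ≤ δ := by linarith
  have hfin := hball (y := δ) (by rw [Real.dist_eq, abs_lt]; constructor <;> linarith)
  have hn : ∀ τ, 0 ≤ δ ^ (τ + 1) * (p τ * A + q τ * B) := fun τ =>
    mul_nonneg (pow_nonneg hδ _) (hm0 τ)
  have hsm : Summable (fun τ => δ ^ (τ + 1) * (p τ * A + q τ * B)) :=
    Summable.of_nonneg_of_le hn
      (fun τ => mul_le_of_le_one_left (hm0 τ) (pow_le_one₀ hδ h2.le)) hms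
  exact hfin.trans_le (hsm.sum_le_tsum s (fun τ _ => hn τ))
end
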